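/- arXiv:2510.22757 — 6 statements merged into one kernel-verified Lean document; each statement's English description precedes it below -/
import Mathlib

section
/- Let Θ be a nonempty type, F, J : Θ → ℝ, ε ≥ 0, J̄ ≥ 0, η > 0, μ₁ ≥ 0 and K ≥ 1. Let μ₁, …, μ_{K+1} ∈ ℝ and θ₁, …, θ_K ∈ Θ satisfy: for each k, θₖ maximizes the Lagrangian with multiplier μₖ (i.e. F(θ) + μₖ(ε − J(θ)) ≤ F(θₖ) + μₖ(ε − J(θₖ)) for all θ), 0 ≤ J(θₖ) ≤ J̄, and μₖ₊₁ = max(μₖ − η(ε − J(θₖ)), 0). Let θ* ∈ Θ satisfy J(θ*) ≤ ε. Then (1/K)·Σ_{k=1}^{K} (F(θ*) − F(θₖ)) ≤ η·(max{ε, J̄})² + μ₁²/(2Kη). -/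
theorem dual_descent_objective_gap
    {Θ : Type*} [Nonempty Θ] (F J : Θ → ℝ) (ε Jbar η : ℝ)
    (hε : 0 ≤ ε) (hJbar : 0 ≤ Jbar) (hη : 0 < η)
    (K : ℕ) (hK : 1 ≤ K)
    (μ : ℕ → ℝ) (θ : ℕ → Θ) (hμ1 : 0 ≤ μ 1)
    (hmax : ∀ k, 1 ≤ k → k ≤ K → ∀ θ' : Θ,
      F θ' + μ k * (ε - J θ') ≤ F (θ k) + μ k * (ε - J (θ k)))
    (hJθ : ∀ k, 1 ≤ k → k ≤ K → 0 ≤ J (θ k) ∧ J (θ k) ≤ Jbar)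
    (hupd : ∀ k, 1 ≤ k → k ≤ K → μ (k + 1) = max (μ k - η * (ε - J (θ k))) 0)
    (θstar : Θ) (hfeas : J θstar ≤ ε) :
    (1 / (K : ℝ)) * ∑ k ∈ Finset.Icc 1 K, (F θstar - F (θ k)) ≤
      η * (max ε Jbar) ^ 2 + (μ 1) ^ 2 / (2 * K * η) := by
  have key : ∀ n : ℕ, n ≤ K → 0 ≤ μ (n + 1) ∧
      2 * η * ∑ k ∈ Finset.Icc 1 n, (F θstar - F (θ k)) + μ (n + 1) ^ 2
        ≤ μ 1 ^ 2 + n * (η ^ 2 * (max ε Jbar) ^ 2) := by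
    intro n
    induction n with
    | zero => intro _; simpa using hμ1
    | succ n ih =>
      intro hn
      obtain ⟨h0, h1⟩ := ih (by omega)
      have hm := hmax (n + 1) (by omega) hn θstar
      obtain ⟨hj0, hj1⟩ := hJθ (n + 1) (by omega) hn
      have hu := hupd (n + 1) (by omega) hn
      rw [Finset.sum_Icc_succ_top (by omega)]
      have hM1 := le_max_left ε Jbar
      have hM2 := le_max_right ε Jbar
      generalize max ε Jbar = M at *
      have hd : (ε - J (θ (n + 1))) ^ 2 ≤ M ^ 2 := by
        apply sq_le_sq'
        · linarith
        · linarith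
      have hsq : μ (n + 1 + 1) ^ 2 ≤ (μ (n + 1) - η * (ε - J (θ (n + 1)))) ^ 2 := by
        rw [hu]
        rcases max_cases (μ (n + 1) - η * (ε - J (θ (n + 1)))) 0 with h | h
        · rw [h.1]
        · rw [h.1]; nlinarith [sq_nonneg (μ (n + 1) - η * (ε - J (θ (n + 1))))]
      have hp : 0 ≤ μ (n + 1) * (ε - J θstar) := mul_nonneg h0 (by linarith)
      have hg : F θstar - F (θ (n + 1)) ≤ μ (n + 1) * (ε - J (θ (n + 1))) := by linarith
      have hg2 := mul_le_mul_of_nonneg_left hg (by positivity : 0 ≤ 2 * η)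
      have hd2 := mul_le_mul_of_nonneg_left hd (by positivity : 0 ≤ η ^ 2)
      refine ⟨by rw [hu]; exact le_max_right _ _, ?_⟩
      push_cast
      linarith
  obtain ⟨_, h⟩ := key K le_rfl
  have hKp : (0 : ℝ) < K := by exact_mod_cast hK
  generalize ∑ k ∈ Finset.Icc 1 K, (F θstar - F (θ k)) = S at *
  have e : η * (max ε Jbar) ^ 2 + (μ 1) ^ 2 / (2 * K * η) - (1 / (K : ℝ)) * S
      = (2 * K * η ^ 2 * (max ε Jbar) ^ 2 + μ 1 ^ 2 - 2 * η * S) / (2 * K * η) := by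
    field_simp
  have : 0 ≤ (2 * K * η ^ 2 * (max ε Jbar) ^ 2 + μ 1 ^ 2 - 2 * η * S) / (2 * K * η) := by
    apply div_nonneg _ (by positivity)
    have : 0 ≤ K * (η ^ 2 * (max ε Jbar) ^ 2) := by positivity
    nlinarith [sq_nonneg (μ (K + 1))]
  linarith
end

section
/- (Theorem 1, objective-gap bound with tuned step size.) Let Θ be a nonempty type, F, J : Θ → ℝ, ε ≥ 0, J̄ ≥ 0 with max{ε, J̄} > 0, μ₁ > 0 and K ≥ 1. Set η = μ₁/(√K · max{ε, J̄}). Let μ₁, …, μ_{K+1} ∈ ℝ and θ₁, …, θ_K ∈ Θ satisfy: for each k, θₖ maximizes the Lagrangian with multiplier μₖ, 0 ≤ J(θₖ) ≤ J̄, and μₖ₊₁ = max(μₖ − η(ε − J(θₖ)), 0). Let θ* ∈ Θ satisfy J(θ*) ≤ ε. Then (1/K)·Σ_{k=1}^{K} (F(θ*) − F(θₖ)) ≤ (3/2)·max{ε, J̄}·μ₁/√K. -/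
theorem dual_descent_objective_gap_tuned
    {Θ : Type*} [Nonempty Θ] (F J : Θ → ℝ) (ε Jbar : ℝ)
    (hε : 0 ≤ ε) (hJbar : 0 ≤ Jbar) (hmaxpos : 0 < max ε Jbar)
    (K : ℕ) (hK : 1 ≤ K)
    (μ : ℕ → ℝ) (θ : ℕ → Θ) (hμ1 : 0 < μ 1)
    (η : ℝ) (hη : η = μ 1 / (Real.sqrt K * max ε Jbar))
    (hmax : ∀ k, 1 ≤ k → k ≤ K → ∀ θ' : Θ,
      F θ' + μ k * (ε - J θ') ≤ F (θ k) + μ k * (ε - J (θ k)))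
    (hJθ : ∀ k, 1 ≤ k → k ≤ K → 0 ≤ J (θ k) ∧ J (θ k) ≤ Jbar)
    (hupd : ∀ k, 1 ≤ k → k ≤ K → μ (k + 1) = max (μ k - η * (ε - J (θ k))) 0)
    (θstar : Θ) (hfeas : J θstar ≤ ε) :
    (1 / (K : ℝ)) * ∑ k ∈ Finset.Icc 1 K, (F θstar - F (θ k)) ≤
      (3 / 2) * max ε Jbar * μ 1 / Real.sqrt K := by
  set M := max ε Jbar with hM
  have hKpos : (0 : ℝ) < K := by exact_mod_cast hK
  have hs : 0 < Real.sqrt K := Real.sqrt_pos.mpr hKpos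
  have hss : Real.sqrt K * Real.sqrt K = K := Real.mul_self_sqrt hKpos.le
  set s := Real.sqrt K with hsdef
  have hηpos : 0 < η := by rw [hη]; positivity
  have hηsM : η * (s * M) = μ 1 := by rw [hη]; field_simp
  have key : ∀ n : ℕ, n ≤ K → 0 ≤ μ (n + 1) ∧
      2 * η * ∑ k ∈ Finset.Icc 1 n, (F θstar - F (θ k)) ≤
        μ 1 ^ 2 - μ (n + 1) ^ 2 + n * (η ^ 2 * M ^ 2) := by
    intro n
    induction n with
    | zero => intro _; simp [hμ1.le]
    | succ n ih =>
      intro hn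
      obtain ⟨h0, h1⟩ := ih (by omega)
      have hu := hupd (n + 1) (by omega) hn
      have hm := hmax (n + 1) (by omega) hn θstar
      obtain ⟨hj0, hj1⟩ := hJθ (n + 1) (by omega) hn
      set g := ε - J (θ (n + 1)) with hg
      have hεM : ε ≤ M := le_max_left _ _
      have hJM : Jbar ≤ M := le_max_right _ _
      have hg2 : g ^ 2 ≤ M ^ 2 := by
        apply sq_le_sq'
        · linarith
        · linarith
      have hF : F θstar - F (θ (n + 1)) ≤ μ (n + 1) * g := by
        have := mul_nonneg h0 (sub_nonneg.mpr hfeas)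
        linarith
      have hsq : μ (n + 1 + 1) ^ 2 ≤ (μ (n + 1) - η * g) ^ 2 := by
        rw [hu]
        rcases le_total (μ (n + 1) - η * g) 0 with h | h
        · rw [max_eq_right h]; nlinarith [sq_nonneg (μ (n + 1) - η * g)]
        · rw [max_eq_left h]
      refine ⟨by rw [hu]; exact le_max_right _ _, ?_⟩
      rw [Finset.sum_Icc_succ_top (by omega)]
      push_cast
      have h2 := mul_le_mul_of_nonneg_left hF hηpos.le
      have h3 := mul_le_mul_of_nonneg_left hg2 (sq_nonneg η)
      nlinarith
  obtain ⟨-, hk⟩ := key K le_rfl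
  set S := ∑ k ∈ Finset.Icc 1 K, (F θstar - F (θ k)) with hS
  have e : (K : ℝ) * (η ^ 2 * M ^ 2) = μ 1 ^ 2 := by
    rw [← hηsM, ← hss]; ring
  have hS1 : S ≤ μ 1 * (s * M) := by
    have h5 : η * S ≤ η * (μ 1 * (s * M)) := by
      have : η * (μ 1 * (s * M)) = μ 1 ^ 2 := by
        rw [mul_left_comm, hηsM]; ring
      nlinarith [sq_nonneg (μ (K + 1))]
    exact le_of_mul_le_mul_left h5 hηpos
  have hp : 0 < μ 1 * (s * M) := by positivity
  rw [le_div_iff₀ hs, ← hss]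
  have h6 : 1 / (s * s) * S * s = S / s := by field_simp
  rw [h6, div_le_iff₀ hs]
  nlinarith
end

section
/- (Theorem 1, constraint-violation bound.) Let Θ be a nonempty type, F, J : Θ → ℝ, ε ≥ 0, J̄ ≥ 0 with max{ε, J̄} > 0, μ₁ > 0, K ≥ 1, and η = μ₁/(√K · max{ε, J̄}). Let μ₁, …, μ_{K+1} ∈ ℝ and θ₁, …, θ_K ∈ Θ satisfy: for each k, θₖ maximizes the Lagrangian with multiplier μₖ, 0 ≤ J(θₖ) ≤ J̄, and μₖ₊₁ = max(μₖ − η(ε − J(θₖ)), 0). Suppose μ* ≥ 0 is such that some θ' ∈ Θ maximizes the Lagrangian with multiplier μ*, and for every k, F(θₖ) + μₖ(ε − J(θₖ)) ≥ F(θ') + μ*(ε − J(θ')). Then for every μ_C > μ*, (1/K)·Σ_{k=1}^{K} (J(θₖ) − ε) ≤ max{ε, J̄}·(μ₁ + (μ_C − μ₁)²/(2μ₁)) / (√K·(μ_C − μ*)). -/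
theorem dual_descent_constraint_violation
    {Θ : Type*} [Nonempty Θ] (F J : Θ → ℝ) (ε Jbar : ℝ)
    (hε : 0 ≤ ε) (hJbar : 0 ≤ Jbar) (hmaxpos : 0 < max ε Jbar)
    (K : ℕ) (hK : 1 ≤ K)
    (μ : ℕ → ℝ) (θ : ℕ → Θ) (hμ1 : 0 < μ 1)
    (η : ℝ) (hη : η = μ 1 / (Real.sqrt K * max ε Jbar))
    (hmax : ∀ k, 1 ≤ k → k ≤ K → ∀ θ'' : Θ,
      F θ'' + μ k * (ε - J θ'') ≤ F (θ k) + μ k * (ε - J (θ k)))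
    (hJθ : ∀ k, 1 ≤ k → k ≤ K → 0 ≤ J (θ k) ∧ J (θ k) ≤ Jbar)
    (hupd : ∀ k, 1 ≤ k → k ≤ K → μ (k + 1) = max (μ k - η * (ε - J (θ k))) 0)
    (μstar : ℝ) (hμstar : 0 ≤ μstar) (θ' : Θ)
    (hmaxstar : ∀ θ'' : Θ,
      F θ'' + μstar * (ε - J θ'') ≤ F θ' + μstar * (ε - J θ'))
    (hQ : ∀ k, 1 ≤ k → k ≤ K →
      F θ' + μstar * (ε - J θ') ≤ F (θ k) + μ k * (ε - J (θ k))) :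
    ∀ μC : ℝ, μstar < μC →
      (1 / (K : ℝ)) * ∑ k ∈ Finset.Icc 1 K, (J (θ k) - ε) ≤
        max ε Jbar * (μ 1 + (μC - μ 1) ^ 2 / (2 * μ 1)) / (Real.sqrt K * (μC - μstar)) := by
  intro μC hC
  set M := max ε Jbar with hM
  have hKpos : (0 : ℝ) < K := by exact_mod_cast hK
  set s := Real.sqrt K with hs
  have hspos : 0 < s := Real.sqrt_pos.mpr hKpos
  have hss : s ^ 2 = K := Real.sq_sqrt hKpos.le
  have hηpos : 0 < η := by rw [hη]; positivity
  have hηM : η * (s * M) = μ 1 := by rw [hη]; field_simp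
  have hεM : ε ≤ M := le_max_left _ _
  have hJM : Jbar ≤ M := le_max_right _ _
  have hCpos : 0 < μC := lt_of_le_of_lt hμstar hC
  have step : ∀ k, 1 ≤ k → k ≤ K →
      2 * η * (μC - μstar) * (J (θ k) - ε) + (μ (k + 1) - μC) ^ 2
        ≤ (μ k - μC) ^ 2 + η ^ 2 * M ^ 2 := by
    intro k h1 h2
    obtain ⟨ha, hb⟩ := hJθ k h1 h2
    have hg : (ε - J (θ k)) ^ 2 ≤ M ^ 2 := by
      apply sq_le_sq'
      · linarith
      · linarith
    have hpos : 0 ≤ (ε - J (θ k)) * (μ k - μstar) := by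
      have e1 := hQ k h1 h2
      have e2 := hmaxstar (θ k)
      linarith
    have hproj : (μ (k + 1) - μC) ^ 2 ≤ (μ k - η * (ε - J (θ k)) - μC) ^ 2 := by
      rw [hupd k h1 h2]
      rcases le_total (μ k - η * (ε - J (θ k))) 0 with h | h
      · rw [max_eq_right h]
        nlinarith
      · rw [max_eq_left h]
    have e3 := mul_le_mul_of_nonneg_left hg (sq_nonneg η)
    have e4 := mul_nonneg hηpos.le hpos
    linarith
  have main : ∀ n : ℕ, n ≤ K →
      2 * η * (μC - μstar) * ∑ k ∈ Finset.Icc 1 n, (J (θ k) - ε) + (μ (n + 1) - μC) ^ 2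
        ≤ (μ 1 - μC) ^ 2 + n * (η ^ 2 * M ^ 2) := by
    intro n
    induction n with
    | zero => intro _; simp
    | succ n ih =>
      intro hn
      have e1 := ih (by omega)
      have e2 := step (n + 1) (by omega) hn
      rw [Finset.sum_Icc_succ_top (by omega), mul_add]
      push_cast
      linarith
  have hfin := main K le_rfl
  set S := ∑ k ∈ Finset.Icc 1 K, (J (θ k) - ε)
  have hd : 0 < μC - μstar := sub_pos.mpr hC
  have hKη : (K : ℝ) * (η ^ 2 * M ^ 2) = μ 1 ^ 2 := by
    rw [← hss, ← hηM]; ring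
  rw [hKη] at hfin
  have h1 : 2 * η * (μC - μstar) * S ≤ (μC - μ 1) ^ 2 + 2 * μ 1 ^ 2 := by
    nlinarith [sq_nonneg (μ (K + 1) - μC), sq_nonneg (μ 1)]
  have h2 : 2 * μ 1 * (μC - μstar) * S ≤ s * M * ((μC - μ 1) ^ 2 + 2 * μ 1 ^ 2) := by
    have := mul_le_mul_of_nonneg_left h1 (mul_pos hspos hmaxpos).le
    calc 2 * μ 1 * (μC - μstar) * S = s * M * (2 * η * (μC - μstar) * S) := by
          rw [← hηM]; ring
      _ ≤ _ := this
  have e : M * (μ 1 + (μC - μ 1) ^ 2 / (2 * μ 1)) / (s * (μC - μstar))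
      = (1 / (K : ℝ)) * (s * M * ((μC - μ 1) ^ 2 + 2 * μ 1 ^ 2) / (2 * μ 1 * (μC - μstar))) := by
    rw [← hss]
    have := hd.ne'
    field_simp
    ring
  rw [e]
  apply mul_le_mul_of_nonneg_left _ (by positivity)
  rw [le_div_iff₀ (by positivity)]
  linarith
end

section
/- (One-step Moreau envelope descent.) Let E be a real inner product space, φ : E → ℝ bounded below, β > 0, λ > 0, w, g ∈ E and w⁺ = w − λg. Let ŵ be a proximal point of φ at w with parameter β, and let Φ denote the Moreau-type envelope Φ(u) = inf_{w'} (φ(w') + β‖w' − u‖²). Suppose that for some D ∈ ℝ, φ(ŵ) ≥ φ(w) − D + ⟨g, ŵ − w⟩ − (β/2)‖ŵ − w‖². Then Φ(w⁺) ≤ Φ(w) + 2βλ·(φ(ŵ) − φ(w) + D + (β/2)‖ŵ − w‖²) + λ²β‖g‖². -/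
open scoped RealInnerProductSpace

theorem moreau_envelope_one_step_descent
    {E : Type*} [NormedAddCommGroup E] [InnerProductSpace ℝ E]
    (φ : E → ℝ) (m : ℝ) (hbdd : ∀ w' : E, m ≤ φ w')
    (β lam : ℝ) (hβ : 0 < β) (hlam : 0 < lam)
    (w g : E) (wplus : E) (hwplus : wplus = w - lam • g)
    (what : E)
    (hprox : ∀ w' : E, φ what + β * ‖what - w‖ ^ 2 ≤ φ w' + β * ‖w' - w‖ ^ 2)
    (Φ : E → ℝ) (hΦ : ∀ u : E, Φ u = ⨅ w' : E, (φ w' + β * ‖w' - u‖ ^ 2))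
    (D : ℝ)
    (hlower : φ w - D + ⟪g, what - w⟫ - (β / 2) * ‖what - w‖ ^ 2 ≤ φ what) :
    Φ wplus ≤ Φ w + 2 * β * lam * (φ what - φ w + D + (β / 2) * ‖what - w‖ ^ 2)
      + lam ^ 2 * β * ‖g‖ ^ 2 := by
  have h1 : φ what + β * ‖what - w‖ ^ 2 ≤ Φ w := by
    rw [hΦ]
    exact le_ciInf hprox
  have h2 : Φ wplus ≤ φ what + β * ‖what - wplus‖ ^ 2 := by
    rw [hΦ]
    refine ciInf_le (f := fun w' : E => φ w' + β * ‖w' - wplus‖ ^ 2) ⟨m, ?_⟩ what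
    rintro _ ⟨x, rfl⟩
    have := hbdd x
    have h : 0 ≤ β * ‖x - wplus‖ ^ 2 := by positivity
    show m ≤ φ x + β * ‖x - wplus‖ ^ 2
    linarith
  have h3 : ‖what - wplus‖ ^ 2
      = ‖what - w‖ ^ 2 + 2 * lam * ⟪g, what - w⟫ + lam ^ 2 * ‖g‖ ^ 2 := by
    have e : what - wplus = (what - w) + lam • g := by rw [hwplus]; abel
    rw [e, norm_add_sq_real, real_inner_smul_right, norm_smul, real_inner_comm, mul_pow,
      Real.norm_eq_abs, sq_abs]
    ring
  have h4 : 2 * β * lam * ⟪g, what - w⟫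
      ≤ 2 * β * lam * (φ what - φ w + D + (β / 2) * ‖what - w‖ ^ 2) :=
    mul_le_mul_of_nonneg_left (by linarith) (by positivity)
  rw [h3] at h2
  linarith
end

section
/- (Deterministic core of Theorem 2.) Let E be a real inner product space, φ : E → ℝ with φ(w') ≥ m for all w' ∈ E, β > 0, λ > 0, L ≥ 0, H ≥ 1. Let w₁, …, w_{H+1} ∈ E, g₁, …, g_H ∈ E with w_{j+1} = w_j − λg_j and ‖g_j‖ ≤ L for each j, and let ŵ_j be a proximal point of φ at w_j with parameter β. Suppose that for each j there is D_j ∈ ℝ with φ(ŵ_j) ≥ φ(w_j) − D_j + ⟨g_j, ŵ_j − w_j⟩ − (β/2)‖ŵ_j − w_j‖². Let Φ(u) = inf_{w'} (φ(w') + β‖w' − u‖²). Then (1/H)·Σ_{j=1}^{H} ‖w_j − ŵ_j‖² ≤ (Φ(w₁) − m)/(β²λH) + (2/β)·(1/H)·Σ_{j=1}^{H} D_j + λL²/β. -/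
open scoped RealInnerProductSpace

theorem minmax_deterministic_core
    {E : Type*} [NormedAddCommGroup E] [InnerProductSpace ℝ E]
    (φ : E → ℝ) (m : ℝ) (hbdd : ∀ w' : E, m ≤ φ w')
    (β lam L : ℝ) (hβ : 0 < β) (hlam : 0 < lam) (hL : 0 ≤ L)
    (H : ℕ) (hH : 1 ≤ H)
    (w : ℕ → E) (g : ℕ → E)
    (hupd : ∀ j, 1 ≤ j → j ≤ H → w (j + 1) = w j - lam • g j)
    (hg : ∀ j, 1 ≤ j → j ≤ H → ‖g j‖ ≤ L)
    (what : ℕ → E)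
    (hprox : ∀ j, 1 ≤ j → j ≤ H →
      ∀ w' : E, φ (what j) + β * ‖what j - w j‖ ^ 2 ≤ φ w' + β * ‖w' - w j‖ ^ 2)
    (D : ℕ → ℝ)
    (hlower : ∀ j, 1 ≤ j → j ≤ H →
      φ (w j) - D j + ⟪g j, what j - w j⟫ - (β / 2) * ‖what j - w j‖ ^ 2 ≤ φ (what j))
    (Φ : E → ℝ) (hΦ : ∀ u : E, Φ u = ⨅ w' : E, (φ w' + β * ‖w' - u‖ ^ 2)) :
    (1 / (H : ℝ)) * ∑ j ∈ Finset.Icc 1 H, ‖w j - what j‖ ^ 2 ≤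
      (Φ (w 1) - m) / (β ^ 2 * lam * H)
        + (2 / β) * ((1 / (H : ℝ)) * ∑ j ∈ Finset.Icc 1 H, D j)
        + lam * L ^ 2 / β := by
  have hle : ∀ u w' : E, Φ u ≤ φ w' + β * ‖w' - u‖ ^ 2 := by
    intro u w'
    rw [hΦ]
    refine ciInf_le ⟨m, ?_⟩ w'
    rintro _ ⟨v, rfl⟩
    have h1 := hbdd v
    have h2 : 0 ≤ β * ‖v - u‖ ^ 2 := by positivity
    show m ≤ φ v + β * ‖v - u‖ ^ 2
    linarith
  have hge : ∀ u : E, m ≤ Φ u := by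
    intro u
    rw [hΦ]
    refine le_ciInf fun v => ?_
    have h1 := hbdd v
    have h2 : 0 ≤ β * ‖v - u‖ ^ 2 := by positivity
    linarith
  have step : ∀ j, 1 ≤ j → j ≤ H →
      β ^ 2 * lam * ‖w j - what j‖ ^ 2 ≤
        Φ (w j) - Φ (w (j + 1)) + 2 * β * lam * D j + β * lam ^ 2 * L ^ 2 := by
    intro j h1 h2
    have hp : φ (what j) + β * ‖what j - w j‖ ^ 2 ≤ Φ (w j) := by
      rw [hΦ]
      exact le_ciInf (hprox j h1 h2)
    have hs := hle (w (j + 1)) (what j)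
    have e : what j - w (j + 1) = (what j - w j) + lam • g j := by
      rw [hupd j h1 h2]; abel
    rw [e, norm_add_sq_real, inner_smul_right, norm_smul, Real.norm_of_nonneg hlam.le,
      real_inner_comm, mul_pow] at hs
    have hq := hprox j h1 h2 (w j)
    simp only [sub_self, norm_zero] at hq
    have hl := hlower j h1 h2
    have hgg : ‖g j‖ ^ 2 ≤ L ^ 2 := pow_le_pow_left₀ (norm_nonneg _) (hg j h1 h2) 2
    rw [norm_sub_rev (w j)]
    have hi : ⟪g j, what j - w j⟫ ≤ D j - β / 2 * ‖what j - w j‖ ^ 2 := by linarith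
    have a1 := mul_le_mul_of_nonneg_left hi (by positivity : 0 ≤ 2 * β * lam)
    have a2 := mul_le_mul_of_nonneg_left hgg (by positivity : 0 ≤ β * lam ^ 2)
    linarith
  have tot : ∀ k, k ≤ H → β ^ 2 * lam * ∑ j ∈ Finset.Icc 1 k, ‖w j - what j‖ ^ 2 ≤
      Φ (w 1) - Φ (w (k + 1)) + 2 * β * lam * ∑ j ∈ Finset.Icc 1 k, D j
        + k * (β * lam ^ 2 * L ^ 2) := by
    intro k
    induction k with
    | zero => simp
    | succ k ih =>
      intro hk
      have h1 := ih (by omega)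
      have h2 := step (k + 1) (by omega) hk
      rw [Finset.sum_Icc_succ_top (by omega), Finset.sum_Icc_succ_top (by omega)]
      push_cast
      linarith
  have ht := tot H le_rfl
  have hm := hge (w (H + 1))
  have hH0 : (0 : ℝ) < H := by exact_mod_cast hH
  have hc : 0 < β ^ 2 * lam * H := by positivity
  refine le_of_mul_le_mul_left ?_ hc
  have e1 : β ^ 2 * lam * H * ((1 / (H : ℝ)) * ∑ j ∈ Finset.Icc 1 H, ‖w j - what j‖ ^ 2)
      = β ^ 2 * lam * ∑ j ∈ Finset.Icc 1 H, ‖w j - what j‖ ^ 2 := by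
    field_simp
  have e2 : β ^ 2 * lam * H * ((Φ (w 1) - m) / (β ^ 2 * lam * H)
        + (2 / β) * ((1 / (H : ℝ)) * ∑ j ∈ Finset.Icc 1 H, D j)
        + lam * L ^ 2 / β) = Φ (w 1) - m + 2 * β * lam * ∑ j ∈ Finset.Icc 1 H, D j
        + H * (β * lam ^ 2 * L ^ 2) := by
    field_simp
  rw [e1, e2]
  linarith
end

section
/- (Chain rule for KL divergence.) Let X and Y be standard Borel measurable spaces, let p and q be probability measures on X, and let κ, η be Markov kernels from X to Y. Then D_KL(p ⊗ κ ‖ q ⊗ η) = D_KL(p ‖ q) + ∫ D_KL(κ(x) ‖ η(x)) dp(x), where p ⊗ κ denotes the measure on X × Y obtained by composing p with the kernel κ, and the identity is understood in [0, ∞]. -/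
open MeasureTheory ProbabilityTheory
open scoped ENNReal

/-- The Kullback–Leibler divergence `D_KL(μ ‖ ν)`, with values in `[0, ∞]`:
it equals `∫ log (dμ/dν) dμ` when `μ ≪ ν` (and this integral exists), and `∞` otherwise. -/
noncomputable def klDiv {X : Type*} [MeasurableSpace X] (μ ν : Measure X) : ℝ≥0∞ :=
  haveI := Classical.propDecidable
  if _h : μ ≪ ν ∧ Integrable (llr μ ν) μ then ENNReal.ofReal (∫ x, llr μ ν x ∂μ) else ⊤

lemma klDiv_eq_infoKL {X : Type*} [MeasurableSpace X] (μ ν : Measure X)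
    [IsProbabilityMeasure μ] [IsProbabilityMeasure ν] :
    klDiv μ ν = InformationTheory.klDiv μ ν := by
  by_cases h : μ ≪ ν ∧ Integrable (llr μ ν) μ
  · rw [InformationTheory.klDiv_of_ac_of_integrable h.1 h.2]
    simp [klDiv, h]
  · have : InformationTheory.klDiv μ ν = ⊤ := by
      by_contra h'
      exact h (InformationTheory.klDiv_ne_top_iff.mp h')
    rw [this]
    simp only [klDiv, h, dite_false]

lemma rnDeriv_compProd_right_aux {X Y : Type*} [MeasurableSpace X] [StandardBorelSpace X]
    [MeasurableSpace Y] [StandardBorelSpace Y]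
    (p : Measure X) [IsProbabilityMeasure p]
    (κ η : Kernel X Y) [IsMarkovKernel κ] [IsMarkovKernel η]
    (h : ∀ᵐ a ∂p, κ a ≪ η a) :
    (p ⊗ₘ κ).rnDeriv (p ⊗ₘ η) =ᵐ[p ⊗ₘ η] fun z ↦ κ.rnDeriv η z.1 z.2 := by
  have hm : Measurable (fun z : X × Y ↦ κ.rnDeriv η z.1 z.2) := Kernel.measurable_rnDeriv κ η
  have heq : (p ⊗ₘ η).withDensity (fun z ↦ κ.rnDeriv η z.1 z.2) = p ⊗ₘ κ := by
    ext s hs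
    rw [withDensity_apply _ hs, ← lintegral_indicator hs,
      Measure.lintegral_compProd (hm.indicator hs), Measure.compProd_apply hs]
    refine lintegral_congr_ae ?_
    filter_upwards [h] with a ha
    have hs' : MeasurableSet (Prod.mk a ⁻¹' s) := measurable_prodMk_left hs
    rw [← Kernel.setLIntegral_rnDeriv ha hs', ← lintegral_indicator hs']
    rfl
  rw [← heq]
  exact Measure.rnDeriv_withDensity _ hm

lemma infoKL_compProd_right_aux {X Y : Type*} [MeasurableSpace X] [StandardBorelSpace X]
    [MeasurableSpace Y] [StandardBorelSpace Y]
    (p : Measure X) [IsProbabilityMeasure p]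
    (κ η : Kernel X Y) [IsMarkovKernel κ] [IsMarkovKernel η] :
    InformationTheory.klDiv (p ⊗ₘ κ) (p ⊗ₘ η)
      = ∫⁻ x, InformationTheory.klDiv (κ x) (η x) ∂p := by
  by_cases h : ∀ᵐ a ∂p, κ a ≪ η a
  · have hm : Measurable (fun z : X × Y ↦ κ.rnDeriv η z.1 z.2) := Kernel.measurable_rnDeriv κ η
    rw [InformationTheory.klDiv_eq_lintegral_klFun_of_ac
      (Measure.absolutelyContinuous_compProd_right_iff.mpr h)]
    have h1 : ∫⁻ z, ENNReal.ofReal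
          (InformationTheory.klFun ((p ⊗ₘ κ).rnDeriv (p ⊗ₘ η) z).toReal) ∂(p ⊗ₘ η)
        = ∫⁻ z, ENNReal.ofReal
          (InformationTheory.klFun (κ.rnDeriv η z.1 z.2).toReal) ∂(p ⊗ₘ η) := by
      refine lintegral_congr_ae ?_
      filter_upwards [rnDeriv_compProd_right_aux p κ η h] with z hz
      rw [hz]
    have hm2 : Measurable (fun z : X × Y ↦ ENNReal.ofReal
        (InformationTheory.klFun (κ.rnDeriv η z.1 z.2).toReal)) :=
      (InformationTheory.measurable_klFun.comp hm.ennreal_toReal).ennreal_ofReal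
    rw [h1, Measure.lintegral_compProd hm2]
    refine lintegral_congr_ae ?_
    filter_upwards [h] with a ha
    rw [InformationTheory.klDiv_eq_lintegral_klFun_of_ac ha]
    refine lintegral_congr_ae ?_
    filter_upwards [Kernel.rnDeriv_eq_rnDeriv_measure (κ := κ) (η := η) (a := a)] with y hy
    rw [hy]
  · rw [InformationTheory.klDiv_of_not_ac
      (fun h' ↦ h (Measure.absolutelyContinuous_compProd_right_iff.mp h'))]
    have hS := (Kernel.measurableSet_absolutelyContinuous κ η).compl
    have h0 : p {a | κ a ≪ η a}ᶜ ≠ 0 := h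
    symm
    rw [eq_top_iff]
    calc ⊤ = ∫⁻ x in {a | κ a ≪ η a}ᶜ, ⊤ ∂p := by
          rw [setLIntegral_const, ENNReal.top_mul h0]
      _ ≤ ∫⁻ x in {a | κ a ≪ η a}ᶜ, InformationTheory.klDiv (κ x) (η x) ∂p := by
          refine lintegral_mono_ae ?_
          filter_upwards [ae_restrict_mem hS] with a ha
          rw [InformationTheory.klDiv_of_not_ac ha]
      _ ≤ _ := setLIntegral_le_lintegral _ _

theorem klDiv_chain_rule
    {X Y : Type*} [MeasurableSpace X] [StandardBorelSpace X]
    [MeasurableSpace Y] [StandardBorelSpace Y]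
    (p q : Measure X) [IsProbabilityMeasure p] [IsProbabilityMeasure q]
    (κ η : ProbabilityTheory.Kernel X Y) [IsMarkovKernel κ] [IsMarkovKernel η] :
    klDiv (p ⊗ₘ κ) (q ⊗ₘ η) = klDiv p q + ∫⁻ x, klDiv (κ x) (η x) ∂p := by
  simp_rw [klDiv_eq_infoKL]
  rw [InformationTheory.klDiv_compProd_eq_add, infoKL_compProd_right_aux]
end
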